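/- For every finitely supported function f : ℤ → ℤ_{≥0} there exists a multiset of q-strings, pairwise in general position, whose indicator functions sum to f; moreover this multiset is unique (up to reordering). -/

import Mathlib

/-!
q-string combinatorics for `U_q(sl₂-hat)`: existence and uniqueness of the
string factorization of a dominant monomial.
-/

/-!
The factorization is the greedy one. If `f ≠ 0`, let `p` be a q-string of greatest length
among those contained in the support of `f`.

* Any q-string `q` in the support is in general position with `p` (`IsLongest.genPos`): if
  `p ∪ q` is a q-string, it lies in the support, so it is no longer than `p`, hence equals `p`.
* Every factorization of `f` contains `p` (`IsLongest.mem_of_isFactorization`): among its members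
  meeting `p`, take a longest one `q`. The maximality of `p` forces `q ⊆ p`. If `q ≠ p`, some
  element of `p` is adjacent to an end of `q`, and it is covered by a member `q'`. Then `q ∪ q'`
  is a q-string, so general position forces `q ⊊ q'`, against the choice of `q`.

So the factorizations of `f` are exactly those of `f - 1_p` with `p` added, and induction on the
total mass of `f` gives existence and uniqueness together.
-/

noncomputable section
open scoped Classical

namespace QStrings

/-- The q-string `Σ_{a,r} = {a + r + 1 - 2 j : j = 1, …, r}` — an arithmetic
progression of length `r` and step `2`. -/
def qstring (a : ℤ) (r : ℕ) : Finset ℤ :=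
  (Finset.Icc 1 r).image fun j => a + (r : ℤ) + 1 - 2 * (j : ℤ)

/-- A finite set of integers is a q-string if it equals `Σ_{a,r}` for some
`a ∈ ℤ` and some integer `r ≥ 1`. -/
def IsQString (S : Finset ℤ) : Prop :=
  ∃ (a : ℤ) (r : ℕ), 1 ≤ r ∧ S = qstring a r

/-- Two q-strings (given by their data `(a, r)`) are in general position if
either their union is not a q-string, or one is contained in the other. -/
def GenPos (p q : ℤ × ℕ) : Prop :=
  ¬ IsQString (qstring p.1 p.2 ∪ qstring q.1 q.2) ∨
    qstring p.1 p.2 ⊆ qstring q.1 q.2 ∨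
    qstring q.1 q.2 ⊆ qstring p.1 p.2

/-- The indicator function of the q-string `Σ_{a,r}`. -/
def ind (a : ℤ) (r : ℕ) (k : ℤ) : ℕ := if k ∈ qstring a r then 1 else 0

/-- In `qstring` the index `j` is elaborated as an integer, and `Finset.Icc 1 r` is coerced to a
`Finset ℤ` through the monad structure of `Finset`; here `j` is a natural number. -/
lemma qstring_eq_image (a : ℤ) (r : ℕ) :
    qstring a r = (Finset.Icc 1 r).image fun j : ℕ => a + (r : ℤ) + 1 - 2 * (j : ℤ) := by
  ext k
  simp [qstring]

lemma mem_qstring {a : ℤ} {r : ℕ} {k : ℤ} :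
    k ∈ qstring a r ↔ a - r + 1 ≤ k ∧ k ≤ a + r - 1 ∧ (k - (a + r + 1)) % 2 = 0 := by
  simp only [qstring_eq_image, Finset.mem_image, Finset.mem_Icc]
  constructor
  · rintro ⟨j, hj, rfl⟩
    omega
  · intro h
    exact ⟨((a + r + 1 - k) / 2).toNat, by omega, by omega⟩

lemma card_qstring (a : ℤ) (r : ℕ) : (qstring a r).card = r := by
  rw [qstring_eq_image, Finset.card_image_of_injective _ (fun i j h => by simp at h; omega)]
  simp

/-- A q-string is determined, with its data, by its underlying set. -/
lemma data_eq_of_qstring_eq {p q : ℤ × ℕ} (hp : 1 ≤ p.2)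
    (h : qstring p.1 p.2 = qstring q.1 q.2) : p = q := by
  have hr : p.2 = q.2 := by rw [← card_qstring p.1 p.2, h, card_qstring]
  have h1 : p.1 + p.2 - 1 ∈ qstring q.1 q.2 := h ▸ mem_qstring.2 (by omega)
  have h2 : p.1 - p.2 + 1 ∈ qstring q.1 q.2 := h ▸ mem_qstring.2 (by omega)
  rw [mem_qstring] at h1 h2
  exact Prod.ext (by omega) hr

lemma isQString_of_mem_iff {A : Finset ℤ} {lo hi : ℤ} (hle : lo ≤ hi) (hpar : (hi - lo) % 2 = 0)
    (hA : ∀ k, k ∈ A ↔ lo ≤ k ∧ k ≤ hi ∧ (k - lo) % 2 = 0) : IsQString A := by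
  refine ⟨(lo + hi) / 2, ((hi - lo) / 2 + 1).toNat, by omega, ?_⟩
  ext k
  rw [hA, mem_qstring]
  omega

/-- Two q-strings that meet, or of which the second continues the first upwards, have a q-string
as their union. -/
lemma isQString_union {a b : ℤ} {r s : ℕ} {k l : ℤ} (hk : k ∈ qstring a r) (hl : l ∈ qstring b s)
    (h : l = k ∨ l = k + 2) : IsQString (qstring a r ∪ qstring b s) := by
  rw [mem_qstring] at hk hl
  refine isQString_of_mem_iff (lo := min (a - r + 1) (b - s + 1))
    (hi := max (a + r - 1) (b + s - 1)) (by omega) (by omega) fun x => ?_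
  rw [Finset.mem_union, mem_qstring, mem_qstring]
  omega

lemma GenPos.symm {p q : ℤ × ℕ} (h : GenPos p q) : GenPos q p := by
  unfold GenPos at *
  rw [Finset.union_comm]
  tauto

/-- The multiset `S` consists of q-strings in pairwise general position whose indicator functions
sum to `f`. -/
def IsFactorization (f : ℤ →₀ ℕ) (S : Multiset (ℤ × ℕ)) : Prop :=
  (∀ p ∈ S, 1 ≤ p.2) ∧ S.Pairwise GenPos ∧ ∀ k : ℤ, (S.map fun p => ind p.1 p.2 k).sum = f k

lemma pairwise_cons {p : ℤ × ℕ} {S : Multiset (ℤ × ℕ)} :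
    (p ::ₘ S).Pairwise GenPos ↔ (∀ q ∈ S, GenPos p q) ∧ S.Pairwise GenPos := by
  induction S using Quotient.inductionOn with
  | _ l =>
    have hs : Std.Symm GenPos := ⟨fun _ _ => GenPos.symm⟩
    simp [Multiset.pairwise_coe_iff_pairwise]

lemma isFactorization_cons {f g : ℤ →₀ ℕ} {p : ℤ × ℕ} {S : Multiset (ℤ × ℕ)}
    (hp : 1 ≤ p.2) (hfg : ∀ k, f k = ind p.1 p.2 k + g k) :
    IsFactorization f (p ::ₘ S) ↔ (∀ q ∈ S, GenPos p q) ∧ IsFactorization g S := by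
  simp only [IsFactorization, pairwise_cons, Multiset.forall_mem_cons, Multiset.map_cons,
    Multiset.sum_cons, hfg, Nat.add_left_cancel_iff, hp, true_and]
  tauto

lemma IsFactorization.subset_support {f : ℤ →₀ ℕ} {S : Multiset (ℤ × ℕ)}
    (hS : IsFactorization f S) {q : ℤ × ℕ} (hq : q ∈ S) : qstring q.1 q.2 ⊆ f.support := by
  intro k hk
  have h := Multiset.single_le_sum (fun _ _ => Nat.zero_le _) _
    (Multiset.mem_map_of_mem (fun p : ℤ × ℕ => ind p.1 p.2 k) hq)
  rw [hS.2.2 k] at h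
  simp only [ind, hk, if_true] at h
  rw [Finsupp.mem_support_iff]
  omega

lemma IsFactorization.exists_mem {f : ℤ →₀ ℕ} {S : Multiset (ℤ × ℕ)}
    (hS : IsFactorization f S) {k : ℤ} (hk : k ∈ f.support) : ∃ q ∈ S, k ∈ qstring q.1 q.2 := by
  by_contra! h
  rw [Finsupp.mem_support_iff, ← hS.2.2 k] at hk
  apply hk
  rw [Multiset.sum_eq_zero_iff]
  intro x hx
  obtain ⟨q, hq, rfl⟩ := Multiset.mem_map.1 hx
  simp [ind, h q hq]

/-- `p` is a q-string contained in `A`, of greatest length among those contained in `A`. -/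
structure IsLongest (A : Finset ℤ) (p : ℤ × ℕ) : Prop where
  pos : 1 ≤ p.2
  subset : qstring p.1 p.2 ⊆ A
  le : ∀ a r, qstring a r ⊆ A → r ≤ p.2

lemma exists_isLongest {A : Finset ℤ} (hA : A.Nonempty) : ∃ p, IsLongest A p := by
  obtain ⟨k, hk⟩ := hA
  let R : Set ℕ := {r | ∃ a, qstring a r ⊆ A}
  have h1 : 1 ∈ R := ⟨k, fun x hx => by
    rw [mem_qstring] at hx
    have : x = k := by omega
    rwa [this]⟩
  have hb : BddAbove R := ⟨A.card, by
    rintro r ⟨a, ha⟩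
    simpa [card_qstring] using Finset.card_le_card ha⟩
  obtain ⟨a, ha⟩ := Nat.sSup_mem ⟨1, h1⟩ hb
  exact ⟨(a, sSup R), le_csSup hb h1, ha, fun b s h => le_csSup hb ⟨b, h⟩⟩

lemma IsLongest.subset_of_isQString_union {A : Finset ℤ} {p q : ℤ × ℕ} (hp : IsLongest A p)
    (hq : qstring q.1 q.2 ⊆ A) (h : IsQString (qstring p.1 p.2 ∪ qstring q.1 q.2)) :
    qstring q.1 q.2 ⊆ qstring p.1 p.2 := by
  obtain ⟨c, t, -, hu⟩ := h
  have ht : t ≤ p.2 := hp.le c t (hu ▸ Finset.union_subset hp.subset hq)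
  have := Finset.eq_of_subset_of_card_le
    (Finset.subset_union_left (s₁ := qstring p.1 p.2) (s₂ := qstring q.1 q.2))
    (by rw [hu, card_qstring, card_qstring]; exact ht)
  exact this ▸ Finset.subset_union_right

lemma IsLongest.genPos {A : Finset ℤ} {p q : ℤ × ℕ} (hp : IsLongest A p)
    (hq : qstring q.1 q.2 ⊆ A) : GenPos p q := by
  by_cases h : IsQString (qstring p.1 p.2 ∪ qstring q.1 q.2)
  · exact Or.inr (Or.inr (hp.subset_of_isQString_union hq h))
  · exact Or.inl h

lemma IsFactorization.genPos {f : ℤ →₀ ℕ} {S : Multiset (ℤ × ℕ)} (hS : IsFactorization f S)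
    {p q : ℤ × ℕ} (hp : p ∈ S) (hq : q ∈ S) : GenPos p q := by
  by_cases hpq : q = p
  · exact Or.inr (Or.inl (hpq ▸ subset_rfl))
  · obtain ⟨T, rfl⟩ := Multiset.exists_cons_of_mem hp
    exact (pairwise_cons.1 hS.2.1).1 q ((Multiset.mem_cons.1 hq).resolve_left hpq)

/-- A longest q-string in the support of `f` belongs to every factorization of `f`. -/
lemma IsLongest.mem_of_isFactorization {f : ℤ →₀ ℕ} {p : ℤ × ℕ} {S : Multiset (ℤ × ℕ)}
    (hp : IsLongest f.support p) (hS : IsFactorization f S) : p ∈ S := by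
  have hp1 := hp.pos
  -- `M` collects the members of `S` that meet `p`.
  let M : Finset (ℤ × ℕ) :=
    S.toFinset.filter fun q => ∃ k, k ∈ qstring p.1 p.2 ∧ k ∈ qstring q.1 q.2
  have hM : ∀ q, q ∈ M ↔ q ∈ S ∧ ∃ k, k ∈ qstring p.1 p.2 ∧ k ∈ qstring q.1 q.2 := by
    simp [M]
  have hne : M.Nonempty := by
    have hk : p.1 + p.2 - 1 ∈ qstring p.1 p.2 := mem_qstring.2 (by omega)
    obtain ⟨q, hq, hkq⟩ := hS.exists_mem (hp.subset hk)
    exact ⟨q, (hM q).2 ⟨hq, _, hk, hkq⟩⟩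
  obtain ⟨q, hqM, hmax⟩ := M.exists_max_image (fun q => q.2) hne
  obtain ⟨hqS, k, hkp, hkq⟩ := (hM q).1 hqM
  have hqp : qstring q.1 q.2 ⊆ qstring p.1 p.2 :=
    hp.subset_of_isQString_union (hS.subset_support hqS) (isQString_union hkp hkq (Or.inl rfl))
  have hq1 := hS.1 q hqS
  -- By the choice of `q`, no element of `p` is adjacent to `q`.
  have key : ∀ l ∈ qstring p.1 p.2, l ∉ qstring q.1 q.2 →
      ∀ m ∈ qstring q.1 q.2, ¬ (l = m + 2 ∨ m = l + 2) := by
    intro l hlp hlq m hm hlm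
    obtain ⟨q', hq'S, hlq'⟩ := hS.exists_mem (hp.subset hlp)
    have hu : IsQString (qstring q.1 q.2 ∪ qstring q'.1 q'.2) := by
      rcases hlm with h | h
      · exact isQString_union hm hlq' (Or.inr h)
      · rw [Finset.union_comm]
        exact isQString_union hlq' hm (Or.inr h)
    rcases hS.genPos hqS hq'S with h | h | h
    · exact h hu
    · have hlt := Finset.card_lt_card
        (Finset.ssubset_iff_subset_ne.2 ⟨h, fun e => hlq (e ▸ hlq')⟩)
      rw [card_qstring, card_qstring] at hlt
      exact absurd (hmax q' ((hM q').2 ⟨hq'S, l, hlp, hlq'⟩)) (by simpa using hlt)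
    · exact hlq (h hlq')
  -- Hence `q` and `p` have the same top and the same bottom.
  have htop : q.1 + q.2 - 1 ∈ qstring q.1 q.2 := mem_qstring.2 (by omega)
  have hbot : q.1 - q.2 + 1 ∈ qstring q.1 q.2 := mem_qstring.2 (by omega)
  have htp := mem_qstring.1 (hqp htop)
  have hbp := mem_qstring.1 (hqp hbot)
  have h1 : p.1 + p.2 = q.1 + q.2 := by
    by_contra hne
    exact key (q.1 + q.2 + 1) (mem_qstring.2 (by omega)) (by rw [mem_qstring]; omega) _ htop
      (Or.inl (by ring))
  have h2 : p.1 - p.2 = q.1 - q.2 := by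
    by_contra hne
    exact key (q.1 - q.2 - 1) (mem_qstring.2 (by omega)) (by rw [mem_qstring]; omega) _ hbot
      (Or.inr (by ring))
  have : p = q := Prod.ext (by omega) (by omega)
  exact this ▸ hqS

/-- Subtracting from `f` the indicator function of a q-string in its support lowers the total
mass. -/
lemma exists_sub_ind {f : ℤ →₀ ℕ} {p : ℤ × ℕ} (hp : 1 ≤ p.2)
    (hsub : qstring p.1 p.2 ⊆ f.support) :
    ∃ g : ℤ →₀ ℕ, (∀ k, f k = ind p.1 p.2 k + g k) ∧ g.degree < f.degree := by
  let e : ℤ →₀ ℕ := Finsupp.indicator (qstring p.1 p.2) fun _ _ => 1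
  have he : ∀ k, e k = ind p.1 p.2 k := fun k => by
    simp [e, ind, Finsupp.indicator_apply]
  have hle : e ≤ f := fun k => by
    rw [he, ind]
    split_ifs with h
    · exact Nat.one_le_iff_ne_zero.2 (Finsupp.mem_support_iff.1 (hsub h))
    · exact Nat.zero_le _
  have hfe : f = e + (f - e) := (add_tsub_cancel_of_le hle).symm
  refine ⟨f - e, fun k => ?_, ?_⟩
  · rw [← he, ← Finsupp.add_apply, ← hfe]
  · have hpos : e.degree ≠ 0 := by
      rw [Ne, Finsupp.degree_eq_zero_iff]
      intro h0
      have hk : p.1 + p.2 - 1 ∈ qstring p.1 p.2 := mem_qstring.2 (by omega)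
      have := he (p.1 + p.2 - 1)
      simp [h0, ind, hk] at this
    have hd : f.degree = e.degree + (f - e).degree := by
      rw [← map_add, ← hfe]
    omega

lemma existsUnique_isFactorization (n : ℕ) :
    ∀ f : ℤ →₀ ℕ, f.degree = n → ∃! S, IsFactorization f S := by
  induction n using Nat.strong_induction_on with
  | _ n ih =>
    intro f hn
    by_cases hf : f = 0
    · subst hf
      refine ⟨0, ⟨by simp, Multiset.pairwise_zero _, by simp⟩, fun S hS => ?_⟩
      refine Multiset.eq_zero_of_forall_notMem fun p hp => ?_
      have hcard := Finset.card_le_card (hS.subset_support hp)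
      have := hS.1 p hp
      simp only [card_qstring, Finsupp.support_zero, Finset.card_empty] at hcard
      omega
    · obtain ⟨p, hp⟩ := exists_isLongest (Finsupp.support_nonempty_iff.2 hf)
      obtain ⟨g, hfg, hlt⟩ := exists_sub_ind hp.pos hp.subset
      obtain ⟨S, hS, huniq⟩ := ih _ (hn ▸ hlt) g rfl
      have hgf : g.support ⊆ f.support := fun k hk => by
        rw [Finsupp.mem_support_iff] at hk ⊢
        have := hfg k
        omega
      refine ⟨p ::ₘ S, (isFactorization_cons hp.pos hfg).2
        ⟨fun q hq => hp.genPos ((hS.subset_support hq).trans hgf), hS⟩, fun T hT => ?_⟩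
      obtain ⟨T', rfl⟩ := Multiset.exists_cons_of_mem (hp.mem_of_isFactorization hT)
      rw [huniq T' ((isFactorization_cons hp.pos hfg).1 hT).2]

/-- For every finitely supported function `f : ℤ → ℤ≥0`
there exists a multiset of q-strings, pairwise in general position, whose
indicator functions sum to `f`; moreover this multiset is unique (a multiset
being exactly a family up to reordering). -/
theorem string_factorization_exists_unique (f : ℤ →₀ ℕ) :
    ∃! S : Multiset (ℤ × ℕ),
      (∀ p ∈ S, 1 ≤ p.2) ∧ S.Pairwise GenPos ∧
        ∀ k : ℤ, (S.map fun p => ind p.1 p.2 k).sum = f k :=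
  existsUnique_isFactorization _ f rfl

end QStrings
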